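/- Assume T is trace-class and μ-a.e. point of X is a Lebesgue point of f. Then for μ⊗μ-a.e. pair (x,y) ∈ X × X both series Σⱼ λⱼ⁺ (uⱼ⁺(x) - uⱼ⁺(y))² and Σⱼ λⱼ⁻ (uⱼ⁻(x) - uⱼ⁻(y))² converge and Σⱼ λⱼ⁺ (uⱼ⁺(x) - uⱼ⁺(y))² - Σⱼ λⱼ⁻ (uⱼ⁻(x) - uⱼ⁻(y))² = d(x,y)²; that is, the map N(x) := (M(x), M⁻(x)) into the Krein space ℓ² × ℓ² with pseudo-norm ‖(f,g)‖²_K := ‖f‖²₂ - ‖g‖²₂ is an almost-everywhere isometry: ‖N(x) - N(y)‖²_K = d(x,y)² for μ⊗μ-a.e. (x,y). -/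

import Mathlib

open MeasureTheory Metric Filter Topology

noncomputable section

/-- The MDS kernel `k(x,y) = -(1/2) d(x,y)²`. -/
def mdsK {X : Type*} [MetricSpace X] (x y : X) : ℝ := -(1/2) * dist x y ^ 2

/-- The centered MDS kernel. -/
def mdsKT {X : Type*} [MetricSpace X] [MeasurableSpace X] (μ : Measure X) (x y : X) : ℝ :=
  mdsK x y - (∫ y', mdsK x y' ∂μ) - (∫ x', mdsK x' y ∂μ) + ∫ x', ∫ y', mdsK x' y' ∂μ ∂μ

/-- `x` is a Lebesgue point of `f`: all balls around `x` have positive measure and the averages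
of `f` over `B_r(x)` converge to `f(x)` as `r → 0⁺`. -/
def IsLebPoint {X : Type*} [MetricSpace X] [MeasurableSpace X]
    (μ : Measure X) (f : X → ℝ) (x : X) : Prop :=
  (∀ r > 0, 0 < μ (ball x r)) ∧
  Tendsto (fun r : ℝ => (μ (ball x r)).toReal⁻¹ * ∫ y in ball x r, f y ∂μ)
    (𝓝[>] 0) (𝓝 (f x))


/-!
Put `K = mdsKT μ`. Since `-2 k = d²` and the centering terms cancel,
`K x x + K y y - 2 K x y = d(x,y)²`. Hence it suffices to have the expansion
`K x y = Σ λᵢ uᵢ(x) uᵢ(y)` at almost every pair and, with absolute convergence, on the diagonal: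
expanding the square then gives `Σ λᵢ (uᵢ(x) - uᵢ(y))² = d(x,y)²` absolutely, and the series is
split according to the sign of `λᵢ`.

* For almost every pair (`ae_hasSum_kernel`): as `Σ |λᵢ| < ∞` and `∫ uᵢ² = 1`, the series
  `f = Σ |λᵢ| uᵢ²` is finite almost everywhere, so the expansion converges absolutely at almost
  every pair. It also converges to `K` in `L²(μ ⊗ μ)`, and the two limits agree.
* On the diagonal (`hasSum_diag`), which may be a null set: `K` is continuous, so `K x x` is the
  limit of the averages of `K` over `B_r(x) × B_r(x)`, that is, of `Σ λᵢ (avg uᵢ)²`. By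
  continuity of the eigenfunctions with `λᵢ ≠ 0`, the terms converge to `λᵢ uᵢ(x)²`. They are
  dominated by `|λᵢ| avg (uᵢ²)`, whose sum `avg f` converges to `f x` at a Lebesgue point; so a
  Pratt-type dominated convergence theorem (`tendsto_of_hasSum_dominated`) allows the interchange
  of limit and sum.
-/

set_option linter.unusedSectionVars false

/-! ### Continuity and growth of the centered kernel -/

lemma mdsK_comm {X : Type*} [MetricSpace X] (x y : X) : mdsK x y = mdsK y x := by
  simp [mdsK, dist_comm]

lemma continuous_mdsK {X : Type*} [MetricSpace X] :
    Continuous (fun p : X × X => mdsK p.1 p.2) := by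
  unfold mdsK; fun_prop

lemma abs_mdsK_le {X : Type*} [MetricSpace X] (z x y : X) :
    |mdsK x y| ≤ dist z x ^ 2 + dist z y ^ 2 := by
  have h1 : dist x y ≤ dist z x + dist z y := by
    simpa [dist_comm] using dist_triangle x z y
  have h0 : (0 : ℝ) ≤ dist x y := dist_nonneg
  have h2 : |mdsK x y| = 1 / 2 * dist x y ^ 2 := by
    unfold mdsK
    rw [abs_mul, abs_of_nonneg (sq_nonneg (dist x y))]; norm_num
  rw [h2]
  nlinarith [sq_nonneg (dist z x - dist z y), mul_self_le_mul_self h0 h1]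

section Kernel

variable {X : Type*} [MetricSpace X] [SecondCountableTopology X] [MeasurableSpace X]
  [BorelSpace X] {μ : Measure X} [IsProbabilityMeasure μ] {z : X}

lemma memLp_dist_sq (hz : Integrable (fun y => dist z y ^ 4) μ) :
    MemLp (fun y => dist z y ^ 2) 2 μ := by
  rw [memLp_two_iff_integrable_sq (by fun_prop)]
  simpa [← pow_mul] using hz

lemma integrable_dist_sq (hz : Integrable (fun y => dist z y ^ 4) μ) :
    Integrable (fun y => dist z y ^ 2) μ :=
  (memLp_dist_sq hz).integrable (by norm_num)

lemma integrable_mdsK (hz : Integrable (fun y => dist z y ^ 4) μ) (x : X) :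
    Integrable (fun y => mdsK x y) μ := by
  refine ((integrable_const (dist z x ^ 2)).add (integrable_dist_sq hz)).mono'
    (continuous_mdsK.comp (by fun_prop : Continuous fun y => (x, y))).aestronglyMeasurable ?_
  exact ae_of_all _ fun y => by simpa using abs_mdsK_le z x y

/-- The mean `x ↦ ∫ k(x,y) dμ(y)` of the kernel in one variable. -/
def mdsMean (μ : Measure X) (x : X) : ℝ := ∫ y, mdsK x y ∂μ

lemma mdsKT_eq (x y : X) :
    mdsKT μ x y = mdsK x y - mdsMean μ x - mdsMean μ y + ∫ x', mdsMean μ x' ∂μ := by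
  simp only [mdsKT, mdsMean, mdsK_comm _ y]

lemma abs_mdsMean_le (hz : Integrable (fun y => dist z y ^ 4) μ) (x : X) :
    |mdsMean μ x| ≤ dist z x ^ 2 + ∫ y, dist z y ^ 2 ∂μ := by
  have h := norm_integral_le_of_norm_le
    ((integrable_const (dist z x ^ 2)).add (integrable_dist_sq hz))
    (f := fun y => mdsK x y) (ae_of_all μ fun y => abs_mdsK_le z x y)
  simp only [Pi.add_apply] at h
  rw [integral_add (integrable_const _) (integrable_dist_sq hz)] at h
  simpa [mdsMean] using h

/-- Every point has a neighbourhood on which the distance to `z` is bounded; this localizes the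
dominating functions below. -/
lemma eventually_dist_sq_le (z x₀ : X) :
    ∀ᶠ x in 𝓝 x₀, dist z x ^ 2 ≤ dist z x₀ ^ 2 + 1 :=
  ((by fun_prop : Continuous fun x => dist z x ^ 2).tendsto x₀).eventually_le_const (by linarith)

lemma continuous_mdsMean (hz : Integrable (fun y => dist z y ^ 4) μ) :
    Continuous (mdsMean μ) := by
  rw [continuous_iff_continuousAt]
  intro x₀
  refine continuousAt_of_dominated (bound := fun y => (dist z x₀ ^ 2 + 1) + dist z y ^ 2)
    (Eventually.of_forall fun x => (integrable_mdsK hz x).aestronglyMeasurable) ?_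
    ((integrable_const _).add (integrable_dist_sq hz)) ?_
  · filter_upwards [eventually_dist_sq_le z x₀] with x hx
    refine ae_of_all _ fun y => ?_
    have := abs_mdsK_le z x y
    rw [Real.norm_eq_abs]; linarith
  · exact ae_of_all _ fun y =>
      (continuous_mdsK.comp (by fun_prop : Continuous fun x => (x, y))).continuousAt

lemma continuous_mdsKT (hz : Integrable (fun y => dist z y ^ 4) μ) :
    Continuous (fun p : X × X => mdsKT μ p.1 p.2) := by
  simp only [mdsKT_eq]
  have := continuous_mdsMean hz
  have := continuous_mdsK (X := X)
  fun_prop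

lemma abs_mdsKT_le (hz : Integrable (fun y => dist z y ^ 4) μ) (x y : X) :
    |mdsKT μ x y| ≤ 2 * dist z x ^ 2 + 2 * dist z y ^ 2 + 4 * ∫ y, dist z y ^ 2 ∂μ := by
  have hc : |∫ x', mdsMean μ x' ∂μ| ≤ 2 * ∫ y, dist z y ^ 2 ∂μ := by
    have h := norm_integral_le_of_norm_le
      ((integrable_dist_sq hz).add (integrable_const (∫ y, dist z y ^ 2 ∂μ)))
      (f := fun y => mdsMean μ y) (ae_of_all μ fun y => abs_mdsMean_le hz y)
    simp only [Pi.add_apply] at h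
    rw [integral_add (integrable_dist_sq hz) (integrable_const _)] at h
    simp at h
    linarith
  have h1 := abs_mdsK_le z x y
  have h2 := abs_mdsMean_le hz x
  have h3 := abs_mdsMean_le hz y
  rw [mdsKT_eq]
  rw [abs_le] at *
  constructor <;> linarith [hc.1, hc.2, h1.1, h1.2, h2.1, h2.2, h3.1, h3.2]

/-- The kernel is square integrable; this uses the fourth moment. -/
lemma memLp_mdsKT (hz : Integrable (fun y => dist z y ^ 4) μ) :
    MemLp (fun p : X × X => mdsKT μ p.1 p.2) 2 (μ.prod μ) := by
  have h := memLp_dist_sq hz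
  refine MemLp.mono' (g := fun p : X × X =>
      2 * dist z p.1 ^ 2 + 2 * dist z p.2 ^ 2 + 4 * ∫ y, dist z y ^ 2 ∂μ) ?_
    (continuous_mdsKT hz).aestronglyMeasurable
    (ae_of_all _ fun p => abs_mdsKT_le hz p.1 p.2)
  exact (((h.comp_fst μ).const_mul 2).add ((h.comp_snd μ).const_mul 2)).add (memLp_const _)

/-- The continuity of the canonical representatives of the eigenfunctions. -/
lemma continuous_eigenfunction (hz : Integrable (fun y => dist z y ^ 4) μ) {l : ℝ} {v : X → ℝ}
    (hl : l ≠ 0) (hv : MemLp v 2 μ) (heig : ∀ x, l * v x = ∫ y, mdsKT μ x y * v y ∂μ) :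
    Continuous v := by
  have hE : v = fun x => l⁻¹ * ∫ y, mdsKT μ x y * v y ∂μ := by
    funext x; rw [← heig x]; field_simp
  rw [hE]
  refine continuous_const.mul (continuous_iff_continuousAt.2 fun x₀ => ?_)
  refine continuousAt_of_dominated (bound := fun y =>
      (2 * (dist z x₀ ^ 2 + 1) + 2 * dist z y ^ 2 + 4 * ∫ y, dist z y ^ 2 ∂μ) * ‖v y‖)
    (Eventually.of_forall fun x => ?_) ?_ ?_ ?_
  · exact ((continuous_mdsKT hz).comp
      (by fun_prop : Continuous fun y => (x, y))).aestronglyMeasurable.mul hv.1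
  · filter_upwards [eventually_dist_sq_le z x₀] with x hx
    refine ae_of_all _ fun y => ?_
    rw [norm_mul]
    gcongr
    have := abs_mdsKT_le hz x y
    rw [Real.norm_eq_abs]; linarith
  · have h : MemLp (fun y => 2 * (dist z x₀ ^ 2 + 1) + 2 * dist z y ^ 2
        + 4 * ∫ y, dist z y ^ 2 ∂μ) 2 μ :=
      MemLp.add (f := fun y => 2 * (dist z x₀ ^ 2 + 1) + 2 * dist z y ^ 2)
        (MemLp.add (f := fun _ => 2 * (dist z x₀ ^ 2 + 1)) (memLp_const _)
          ((memLp_dist_sq hz).const_mul 2)) (memLp_const _)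
    exact h.integrable_mul hv.norm
  · exact ae_of_all _ fun y => ((continuous_mdsKT hz).comp
      (by fun_prop : Continuous fun x => (x, y))).continuousAt.mul continuousAt_const

end Kernel

/-! ### Summability and limits of series -/

/-- Pratt's form of dominated convergence for series: the dominating series may vary, provided
that it converges termwise and that its sum converges to the sum of the limits. -/
lemma tendsto_of_hasSum_dominated {ι : Type*} {l : Filter ι} {a b : ι → ℕ → ℝ} {A B : ι → ℝ}
    {a₀ b₀ : ℕ → ℝ} {A₀ B₀ : ℝ}
    (hab : ∀ᶠ r in l, ∀ i, |a r i| ≤ b r i) (hab₀ : ∀ i, |a₀ i| ≤ b₀ i)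
    (ha : ∀ i, Tendsto (fun r => a r i) l (𝓝 (a₀ i)))
    (hb : ∀ i, Tendsto (fun r => b r i) l (𝓝 (b₀ i)))
    (hA : ∀ᶠ r in l, HasSum (a r) (A r)) (hB : ∀ᶠ r in l, HasSum (b r) (B r))
    (hA₀ : HasSum a₀ A₀) (hB₀ : HasSum b₀ B₀) (hBl : Tendsto B l (𝓝 B₀)) :
    Tendsto A l (𝓝 A₀) := by
  -- the tail of the dominated series is controlled by the tail of the dominating one
  have tail : ∀ {a b : ℕ → ℝ} {A B : ℝ}, (∀ i, |a i| ≤ b i) → HasSum a A → HasSum b B →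
      ∀ N, |A - ∑ i ∈ Finset.range N, a i| ≤ B - ∑ i ∈ Finset.range N, b i := by
    intro a b A B h hA hB N
    have hA' := (hasSum_nat_add_iff' N).2 hA
    have hB' := (hasSum_nat_add_iff' N).2 hB
    refine abs_le.2 ⟨?_, ?_⟩
    · exact hasSum_le (fun i => (abs_le.1 (h (i + N))).1) hB'.neg hA'
    · exact hasSum_le (fun i => (abs_le.1 (h (i + N))).2) hA' hB'
  rw [Metric.tendsto_nhds]
  intro ε hε
  obtain ⟨N, hN⟩ : ∃ N, B₀ - ∑ i ∈ Finset.range N, b₀ i < ε / 4 := by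
    have h := hB₀.tendsto_sum_nat.eventually (lt_mem_nhds (show B₀ - ε / 4 < B₀ by linarith))
    obtain ⟨N, hN⟩ := h.exists
    exact ⟨N, by linarith⟩
  have h1 : Tendsto (fun r => |∑ i ∈ Finset.range N, a r i - ∑ i ∈ Finset.range N, a₀ i|
      + (B r - ∑ i ∈ Finset.range N, b r i)) l
      (𝓝 (|∑ i ∈ Finset.range N, a₀ i - ∑ i ∈ Finset.range N, a₀ i|
      + (B₀ - ∑ i ∈ Finset.range N, b₀ i))) :=
    ((tendsto_finsetSum _ fun i _ => ha i).sub_const _).abs.add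
      (hBl.sub (tendsto_finsetSum _ fun i _ => hb i))
  rw [sub_self, abs_zero, zero_add] at h1
  filter_upwards [hab, hA, hB, h1.eventually (gt_mem_nhds hN)] with r h2 h3 h4 h5
  have t1 := tail h2 h3 h4 N
  have t0 := tail hab₀ hA₀ hB₀ N
  rw [Real.dist_eq]
  have e : A r - A₀ = (A r - ∑ i ∈ Finset.range N, a r i)
      + (∑ i ∈ Finset.range N, a r i - ∑ i ∈ Finset.range N, a₀ i)
      - (A₀ - ∑ i ∈ Finset.range N, a₀ i) := by ring
  rw [e]
  calc _ ≤ |A r - ∑ i ∈ Finset.range N, a r i|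
      + |∑ i ∈ Finset.range N, a r i - ∑ i ∈ Finset.range N, a₀ i|
      + |A₀ - ∑ i ∈ Finset.range N, a₀ i| := (abs_sub _ _).trans (by gcongr; exact abs_add_le _ _)
    _ < ε := by linarith

/-- Absolute convergence of the bilinear expansion at two points where the diagonal one
converges absolutely. -/
lemma summable_bilin {l a b : ℕ → ℝ} (ha : Summable fun i => |l i| * a i ^ 2)
    (hb : Summable fun i => |l i| * b i ^ 2) : Summable fun i => l i * a i * b i := by
  refine Summable.of_norm_bounded (ha.add hb) fun i => ?_
  rw [Real.norm_eq_abs, mul_assoc, abs_mul, ← mul_add]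
  gcongr
  rw [abs_le]
  constructor <;> nlinarith [sq_nonneg (a i - b i), sq_nonneg (a i + b i)]

/-! ### Averages over small balls -/

/-- The normalized restriction of `μ` to the ball `B_r(x)`. -/
def ballAvg {X : Type*} [MetricSpace X] [MeasurableSpace X] (μ : Measure X) (x : X) (r : ℝ) :
    Measure X := (μ (ball x r))⁻¹ • μ.restrict (ball x r)

lemma abs_integral_sub_le {Y : Type*} [MeasurableSpace Y] {ν : Measure Y} [IsProbabilityMeasure ν]
    {g : Y → ℝ} (hg : Integrable g ν) {c ε : ℝ} (h : ∀ᵐ y ∂ν, |g y - c| ≤ ε) :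
    |∫ y, g y ∂ν - c| ≤ ε := by
  have := norm_integral_le_of_norm_le_const (μ := ν) (f := fun y => g y - c) h
  rw [integral_sub hg (integrable_const _)] at this
  simpa using this

section Avg

variable {X : Type*} [MetricSpace X] [MeasurableSpace X] {μ : Measure X}
  [IsProbabilityMeasure μ] {x : X}

lemma isProb_ballAvg {r : ℝ} (h : 0 < μ (ball x r)) : IsProbabilityMeasure (ballAvg μ x r) := by
  constructor
  simp only [ballAvg, Measure.smul_apply, Measure.restrict_apply MeasurableSet.univ,
    Set.univ_inter, smul_eq_mul]
  exact ENNReal.inv_mul_cancel h.ne' (measure_ne_top _ _)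

lemma ballAvg_absCont (r : ℝ) : ballAvg μ x r ≪ μ :=
  (Measure.smul_absolutelyContinuous).trans Measure.absolutelyContinuous_restrict

lemma ae_mem_ballAvg [OpensMeasurableSpace X] (r : ℝ) : ∀ᵐ y ∂(ballAvg μ x r), y ∈ ball x r :=
  Measure.smul_absolutelyContinuous.ae_le (ae_restrict_mem measurableSet_ball)

lemma integrable_ballAvg {g : X → ℝ} (hg : Integrable g μ) {r : ℝ} (h : 0 < μ (ball x r)) :
    Integrable g (ballAvg μ x r) :=
  hg.restrict.smul_measure (ENNReal.inv_ne_top.2 h.ne')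

lemma integral_ballAvg (g : X → ℝ) (r : ℝ) :
    ∫ y, g y ∂(ballAvg μ x r) = (μ (ball x r)).toReal⁻¹ * ∫ y in ball x r, g y ∂μ := by
  rw [ballAvg, integral_smul_measure, ENNReal.toReal_inv, smul_eq_mul]

lemma tendsto_ballAvg [OpensMeasurableSpace X] {g : X → ℝ} (hc : ContinuousAt g x)
    (hg : Integrable g μ) (h : ∀ r > 0, 0 < μ (ball x r)) :
    Tendsto (fun r => ∫ y, g y ∂(ballAvg μ x r)) (𝓝[>] 0) (𝓝 (g x)) := by
  rw [Metric.tendsto_nhds]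
  intro ε hε
  obtain ⟨δ, hδ, hgδ⟩ := Metric.continuousAt_iff.1 hc (ε / 2) (by positivity)
  filter_upwards [Ioo_mem_nhdsGT hδ] with r hr
  have := isProb_ballAvg (h r hr.1)
  refine lt_of_le_of_lt (abs_integral_sub_le (integrable_ballAvg hg (h r hr.1)) (ε := ε / 2) ?_)
    (by linarith)
  filter_upwards [ae_mem_ballAvg (μ := μ) (x := x) r] with y hy
  exact (hgδ (lt_trans hy hr.2)).le

lemma tendsto_ballAvg_prod [OpensMeasurableSpace X] {g : X × X → ℝ}
    (hc : ContinuousAt g (x, x))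
    (hg : ∀ r > 0, Integrable g ((ballAvg μ x r).prod (ballAvg μ x r)))
    (h : ∀ r > 0, 0 < μ (ball x r)) :
    Tendsto (fun r => ∫ p, g p ∂((ballAvg μ x r).prod (ballAvg μ x r))) (𝓝[>] 0)
      (𝓝 (g (x, x))) := by
  rw [Metric.tendsto_nhds]
  intro ε hε
  obtain ⟨δ, hδ, hgδ⟩ := Metric.continuousAt_iff.1 hc (ε / 2) (by positivity)
  filter_upwards [Ioo_mem_nhdsGT hδ] with r hr
  have := isProb_ballAvg (h r hr.1)
  refine lt_of_le_of_lt (abs_integral_sub_le (hg r hr.1) (ε := ε / 2) ?_) (by linarith)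
  have hm := ae_mem_ballAvg (μ := μ) (x := x) r
  filter_upwards [Measure.quasiMeasurePreserving_fst.ae hm,
    Measure.quasiMeasurePreserving_snd.ae hm] with p hp1 hp2
  refine (hgδ (?_ : dist (p.1, p.2) (x, x) < δ)).le
  rw [Prod.dist_eq]
  exact max_lt (lt_trans hp1 hr.2) (lt_trans hp2 hr.2)

end Avg

/-! ### The spectral expansion of the kernel off and on the diagonal -/

section Expansion

variable {X : Type*} [MeasurableSpace X] {μ : Measure X} [IsProbabilityMeasure μ]
  {lam : ℕ → ℝ} {u : ℕ → X → ℝ}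

/-- If the integrals of the terms are summable, then so are the terms almost everywhere, by
monotone convergence. This excludes the junk value of the `tsum` defining `f`. -/
lemma ae_summable_diag {ν : Measure X}
    (hsq : ∀ i, Integrable (fun x => u i x ^ 2) ν)
    (hs : Summable fun i => |lam i| * ∫ x, u i x ^ 2 ∂ν) :
    ∀ᵐ x ∂ν, Summable fun i => |lam i| * u i x ^ 2 := by
  have hF : ∀ i, Integrable (fun x => |lam i| * u i x ^ 2) ν := fun i => (hsq i).const_mul _
  have h1 : ∑' i, ∫⁻ x, ‖|lam i| * u i x ^ 2‖ₑ ∂ν ≠ ⊤ := by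
    have : ∀ i, ∫⁻ x, ‖|lam i| * u i x ^ 2‖ₑ ∂ν = ENNReal.ofReal (|lam i| * ∫ x, u i x ^ 2 ∂ν) := by
      intro i
      rw [← integral_const_mul, ofReal_integral_eq_lintegral_ofReal (hF i)
        (ae_of_all _ fun x => by positivity)]
      refine lintegral_congr fun x => ?_
      rw [Real.enorm_eq_ofReal (by positivity)]
    simp_rw [this]
    exact hs.tsum_ofReal_ne_top
  rw [← lintegral_tsum fun i => (hF i).1.enorm] at h1
  filter_upwards [ae_lt_top' (AEMeasurable.tsum fun i => (hF i).1.enorm) h1] with x hx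
  have := ENNReal.summable_toReal hx.ne
  refine this.congr fun i => ?_
  rw [toReal_enorm, Real.norm_of_nonneg (by positivity)]

lemma sq_integral_le {ν : Measure X} [IsProbabilityMeasure ν] {v : X → ℝ} (hv : MemLp v 2 ν) :
    (∫ x, v x ∂ν) ^ 2 ≤ ∫ x, v x ^ 2 ∂ν := by
  have h := ProbabilityTheory.variance_nonneg v ν
  rw [ProbabilityTheory.variance_eq_sub hv] at h
  simpa using h

/-- The spectral expansion converges in `L²(μ ⊗ μ)` to the kernel, and absolutely almost
everywhere; the two limits agree almost everywhere. -/
lemma ae_hasSum_kernel {K : X × X → ℝ} (hK : MemLp K 2 (μ.prod μ))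
    (hu : ∀ i, MemLp (u i) 2 μ)
    (hd : ∀ᵐ x ∂μ, Summable fun i => |lam i| * u i x ^ 2)
    (hbasis : Tendsto
      (fun n => ∫ p, (K p - ∑ i ∈ Finset.range n, lam i * u i p.1 * u i p.2) ^ 2
        ∂(μ.prod μ)) atTop (𝓝 0)) :
    ∀ᵐ p ∂(μ.prod μ), HasSum (fun i => lam i * u i p.1 * u i p.2) (K p) := by
  have hF : ∀ n, MemLp (fun p : X × X => K p - ∑ i ∈ Finset.range n, lam i * u i p.1 * u i p.2) 2
      (μ.prod μ) := by
    intro n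
    refine hK.sub (memLp_finsetSum _ fun i _ => ?_)
    have h : MemLp (fun p : X × X => u i p.1 * u i p.2) 2 (μ.prod μ) := by
      refine (memLp_two_iff_integrable_sq ((hu i).1.comp_fst.mul (hu i).1.comp_snd)).2 ?_
      simpa [mul_pow] using (hu i).integrable_sq.mul_prod (hu i).integrable_sq
    simpa [mul_assoc] using h.const_mul (lam i)
  have hL : Tendsto (fun n => eLpNorm (fun p : X × X =>
      K p - ∑ i ∈ Finset.range n, lam i * u i p.1 * u i p.2) 2 (μ.prod μ)) atTop (𝓝 0) := by
    have : ∀ n, eLpNorm (fun p : X × X =>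
        K p - ∑ i ∈ Finset.range n, lam i * u i p.1 * u i p.2) 2 (μ.prod μ)
        = ENNReal.ofReal ((∫ p, (K p - ∑ i ∈ Finset.range n, lam i * u i p.1 * u i p.2) ^ 2
        ∂(μ.prod μ)) ^ (2⁻¹ : ℝ)) := by
      intro n
      rw [(hF n).eLpNorm_eq_integral_rpow_norm (by norm_num) (by norm_num)]
      simp
    simp_rw [this]
    have h2 := (hbasis.rpow_const (p := (2⁻¹ : ℝ)) (by norm_num))
    rw [Real.zero_rpow (by norm_num)] at h2
    simpa using ENNReal.tendsto_ofReal h2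
  have hM := tendstoInMeasure_of_tendsto_eLpNorm (p := 2) (by norm_num)
    (fun n => (hF n).1) (g := fun _ => (0 : ℝ)) aestronglyMeasurable_const
    (by simpa [Pi.sub_def] using hL)
  obtain ⟨ns, hns, hlim⟩ := hM.exists_seq_tendsto_ae
  filter_upwards [hlim, Measure.quasiMeasurePreserving_fst.ae hd,
    Measure.quasiMeasurePreserving_snd.ae hd] with p hp h1 h2
  have hs := summable_bilin h1 h2
  have hS := hs.hasSum.tendsto_sum_nat.comp hns.tendsto_atTop
  have hS' : Tendsto (fun n => K p - ∑ i ∈ Finset.range (ns n), lam i * u i p.1 * u i p.2) atTop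
      (𝓝 (K p - ∑' i, lam i * u i p.1 * u i p.2)) := hS.const_sub _
  have := tendsto_nhds_unique hp hS'
  have e : K p = ∑' i, lam i * u i p.1 * u i p.2 := by linarith
  rw [e]; exact hs.hasSum

/-- Integrating the expansion of the kernel termwise against `ν ⊗ ν`. -/
lemma hasSum_integral_kernel {ν : Measure X} [IsProbabilityMeasure ν] {K : X × X → ℝ}
    (hu : ∀ i, MemLp (u i) 2 ν)
    (hs : Summable fun i => |lam i| * ∫ x, u i x ^ 2 ∂ν)
    (hK : ∀ᵐ p ∂(ν.prod ν), HasSum (fun i => lam i * u i p.1 * u i p.2) (K p)) :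
    HasSum (fun i => lam i * (∫ x, u i x ∂ν) ^ 2) (∫ p, K p ∂(ν.prod ν)) := by
  have hint : ∀ i, Integrable (u i) ν := fun i => (hu i).integrable (by norm_num)
  have hF : ∀ i, Integrable (fun p : X × X => lam i * u i p.1 * u i p.2) (ν.prod ν) := by
    intro i
    simpa [mul_assoc] using ((hint i).mul_prod (hint i)).const_mul (lam i)
  have h := hasSum_integral_of_summable_integral_norm hF ?_
  · have e1 : ∫ p, ∑' i, lam i * u i p.1 * u i p.2 ∂(ν.prod ν) = ∫ p, K p ∂(ν.prod ν) :=
      integral_congr_ae (hK.mono fun p hp => hp.tsum_eq)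
    rw [e1] at h
    have e2 : ∀ i, ∫ p, lam i * u i p.1 * u i p.2 ∂(ν.prod ν) = lam i * (∫ x, u i x ∂ν) ^ 2 := by
      intro i
      simp_rw [mul_assoc]
      rw [integral_const_mul, integral_prod_mul, sq]
    simpa only [e2] using h
  · refine Summable.of_nonneg_of_le (fun i => integral_nonneg fun p => norm_nonneg _) ?_ hs
    intro i
    have e : ∀ p : X × X, ‖lam i * u i p.1 * u i p.2‖ = |lam i| * (|u i p.1| * |u i p.2|) := by
      intro p; simp [mul_assoc]
    simp_rw [e]
    rw [integral_const_mul, integral_prod_mul (fun x => |u i x|) (fun x => |u i x|), ← sq]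
    gcongr
    simpa using sq_integral_le (hu i).norm

end Expansion

/-- Mercer's formula on the diagonal. Off the diagonal the expansion holds only up to null sets,
so that the diagonal has to be reached by averaging over `B_r(x) × B_r(x)`; the Lebesgue point
hypothesis makes the dominating series `Σ |λᵢ| avg(uᵢ²) = avg f` converge to `f x`. -/
lemma hasSum_diag {X : Type*} [MetricSpace X] [SecondCountableTopology X] [MeasurableSpace X]
    [BorelSpace X] {μ : Measure X} [IsProbabilityMeasure μ] {z : X}
    (hz : Integrable (fun y => dist z y ^ 4) μ) {lam : ℕ → ℝ} {u : ℕ → X → ℝ}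
    (hu : ∀ i, MemLp (u i) 2 μ) (hcont : ∀ i, lam i ≠ 0 → Continuous (u i))
    (hs : Summable fun i => |lam i| * ∫ x, u i x ^ 2 ∂μ)
    (hK : ∀ᵐ p ∂(μ.prod μ), HasSum (fun i => lam i * u i p.1 * u i p.2) (mdsKT μ p.1 p.2))
    {x : X} (hx : Summable fun i => |lam i| * u i x ^ 2)
    (hleb : IsLebPoint μ (fun x => ∑' i, |lam i| * u i x ^ 2) x) :
    HasSum (fun i => lam i * u i x ^ 2) (mdsKT μ x x) := by
  obtain ⟨hpos, hlim⟩ := hleb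
  have hu' : ∀ r > 0, ∀ i, MemLp (u i) 2 (ballAvg μ x r) := fun r hr i =>
    ((hu i).restrict _).smul_measure (ENNReal.inv_ne_top.2 (hpos r hr).ne')
  have hs' : ∀ r > 0, Summable fun i => |lam i| * ∫ y, u i y ^ 2 ∂(ballAvg μ x r) := by
    intro r hr
    refine Summable.of_nonneg_of_le (fun i => by positivity) (fun i => ?_)
      (hs.mul_left (μ (ball x r)).toReal⁻¹)
    rw [integral_ballAvg, mul_left_comm]
    gcongr
    · exact ae_of_all _ fun y => sq_nonneg _
    · exact (hu i).integrable_sq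
    · exact Measure.restrict_le_self
  have hA : ∀ r > 0, HasSum (fun i => lam i * (∫ y, u i y ∂(ballAvg μ x r)) ^ 2)
      (∫ p, mdsKT μ p.1 p.2 ∂((ballAvg μ x r).prod (ballAvg μ x r))) := by
    intro r hr
    have := isProb_ballAvg (hpos r hr)
    exact hasSum_integral_kernel (K := fun p => mdsKT μ p.1 p.2) (hu' r hr) (hs' r hr)
      (((ballAvg_absCont r).prod (ballAvg_absCont r)).ae_le hK)
  have hB : ∀ r > 0, HasSum (fun i => |lam i| * ∫ y, u i y ^ 2 ∂(ballAvg μ x r))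
      (∫ y, ∑' i, |lam i| * u i y ^ 2 ∂(ballAvg μ x r)) := by
    intro r hr
    have h := hasSum_integral_of_summable_integral_norm (μ := ballAvg μ x r)
      (F := fun i y => |lam i| * u i y ^ 2) (fun i => (hu' r hr i).integrable_sq.const_mul _) ?_
    · simpa [integral_const_mul] using h
    · simpa [integral_const_mul] using hs' r hr
  have hab : ∀ i, |lam i * u i x ^ 2| = |lam i| * u i x ^ 2 := fun i => by
    rw [abs_mul, abs_of_nonneg (sq_nonneg (u i x))]
  have hx' : Summable fun i => lam i * u i x ^ 2 :=
    Summable.of_abs (by simpa only [hab] using hx)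
  have hpos_ev : ∀ᶠ r : ℝ in 𝓝[>] 0, 0 < r := self_mem_nhdsWithin
  have hT := tendsto_of_hasSum_dominated (l := 𝓝[>] (0 : ℝ))
    (a := fun r i => lam i * (∫ y, u i y ∂(ballAvg μ x r)) ^ 2)
    (b := fun r i => |lam i| * ∫ y, u i y ^ 2 ∂(ballAvg μ x r))
    (hab := ?_) (hab₀ := fun i => (hab i).le) (ha := ?_) (hb := ?_)
    (hA := hpos_ev.mono hA) (hB := hpos_ev.mono hB) (hA₀ := hx'.hasSum) (hB₀ := hx.hasSum)
    (hBl := by simpa only [integral_ballAvg] using hlim)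
  · have hmd := (continuous_mdsKT hz).continuousAt (x := (x, x))
    have hT' := tendsto_ballAvg_prod hmd (fun r hr => ?_) hpos
    · rw [tendsto_nhds_unique hT' hT]
      exact hx'.hasSum
    · have hc : (μ (ball x r))⁻¹ ≠ ⊤ := ENNReal.inv_ne_top.2 (hpos r hr).ne'
      have := isProb_ballAvg (hpos r hr)
      have hd : Integrable (fun y => dist z y ^ 2) (ballAvg μ x r) :=
        integrable_ballAvg (integrable_dist_sq hz) (hpos r hr)
      refine Integrable.mono' (g := fun p : X × X =>
          2 * dist z p.1 ^ 2 + 2 * dist z p.2 ^ 2 + 4 * ∫ y, dist z y ^ 2 ∂μ) ?_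
        (continuous_mdsKT hz).aestronglyMeasurable
        (ae_of_all _ fun p => abs_mdsKT_le hz p.1 p.2)
      exact (((hd.comp_fst _).const_mul 2).add ((hd.comp_snd _).const_mul 2)).add
        (integrable_const _)
  · filter_upwards [hpos_ev] with r hr i
    have := isProb_ballAvg (hpos r hr)
    rw [abs_mul, abs_of_nonneg (sq_nonneg (∫ y, u i y ∂(ballAvg μ x r)))]
    gcongr
    exact sq_integral_le (hu' r hr i)
  · intro i
    by_cases hi : lam i = 0
    · simp [hi]
    · exact ((tendsto_ballAvg (hcont i hi).continuousAt ((hu i).integrable (by norm_num))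
        hpos).pow 2).const_mul _
  · intro i
    by_cases hi : lam i = 0
    · simp [hi]
    · exact (tendsto_ballAvg (g := fun y => u i y ^ 2) ((hcont i hi).pow 2).continuousAt
        (hu i).integrable_sq hpos).const_mul _

/-- Corollary 4.4 (Krein space isometry): under trace-class and a.e. Lebesgue point
assumptions, for `μ ⊗ μ`-a.e. `(x,y)` both series `Σⱼ λⱼ⁺ (uⱼ⁺(x) - uⱼ⁺(y))²` and
`Σⱼ λⱼ⁻ (uⱼ⁻(x) - uⱼ⁻(y))²` converge and their difference equals `d(x,y)²`; i.e. the map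
`N = (M, M⁻)` into the Krein space `ℓ² × ℓ²` is an a.e. isometry:
`‖N(x) - N(y)‖²_K = d(x,y)²` for `μ ⊗ μ`-a.e. `(x,y)`. -/
theorem krein_ae_isometry
    {X : Type*} [MetricSpace X] [CompleteSpace X] [SecondCountableTopology X]
    [MeasurableSpace X] [BorelSpace X]
    (μ : Measure X) [IsProbabilityMeasure μ]
    (hmom : ∃ z : X, Integrable (fun y => dist z y ^ 4) μ)
    (lam : ℕ → ℝ) (u : ℕ → X → ℝ)
    (hmeas : ∀ i, Measurable (u i))
    (heig : ∀ i, lam i ≠ 0 → ∀ x, lam i * u i x = ∫ y, mdsKT μ x y * u i y ∂μ)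
    (horth : ∀ i j, (∫ x, u i x * u j x ∂μ) = if i = j then 1 else 0)
    (htrace : Summable fun i => |lam i|)
    (hbasis : Tendsto
      (fun n => ∫ p, (mdsKT μ p.1 p.2 - ∑ i ∈ Finset.range n, lam i * u i p.1 * u i p.2) ^ 2
        ∂(μ.prod μ)) atTop (𝓝 0))
    (f : X → ℝ) (hf : f = fun x => ∑' i, |lam i| * (u i x) ^ 2)
    (hfint : Integrable f μ)
    (hleb : ∀ᵐ x ∂μ, IsLebPoint μ f x) :
    ∀ᵐ p ∂(μ.prod μ),
      (Summable fun i => max (lam i) 0 * (u i p.1 - u i p.2) ^ 2) ∧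
      (Summable fun i => max (-lam i) 0 * (u i p.1 - u i p.2) ^ 2) ∧
      (∑' i, max (lam i) 0 * (u i p.1 - u i p.2) ^ 2) -
        (∑' i, max (-lam i) 0 * (u i p.1 - u i p.2) ^ 2) = dist p.1 p.2 ^ 2 := by
  obtain ⟨z, hz⟩ := hmom
  have hsq : ∀ i, ∫ x, u i x ^ 2 ∂μ = 1 := fun i => by simpa [sq] using horth i i
  have hu : ∀ i, MemLp (u i) 2 μ := fun i => by
    -- a non-integrable square would have integral `0`
    refine (memLp_two_iff_integrable_sq (hmeas i).aestronglyMeasurable).2 ?_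
    by_contra h
    simpa [integral_undef h] using hsq i
  have hs : Summable fun i => |lam i| * ∫ x, u i x ^ 2 ∂μ := by simpa [hsq] using htrace
  have hd := ae_summable_diag (fun i => (hu i).integrable_sq) hs
  have hK := ae_hasSum_kernel (K := fun p => mdsKT μ p.1 p.2) (memLp_mdsKT hz) hu hd hbasis
  have hdiag : ∀ᵐ x ∂μ, (Summable fun i => |lam i| * u i x ^ 2) ∧
      HasSum (fun i => lam i * u i x ^ 2) (mdsKT μ x x) := by
    filter_upwards [hd, hleb] with x hx hl
    exact ⟨hx, hasSum_diag hz hu (fun i hi => continuous_eigenfunction hz hi (hu i) (heig i hi))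
      hs hK hx (hf ▸ hl)⟩
  filter_upwards [hK, Measure.quasiMeasurePreserving_fst.ae hdiag,
    Measure.quasiMeasurePreserving_snd.ae hdiag] with p hp h1 h2
  have hsum : HasSum (fun i => lam i * (u i p.1 - u i p.2) ^ 2) (dist p.1 p.2 ^ 2) := by
    have h := (h1.2.add h2.2).sub (hp.mul_left 2)
    have e : mdsKT μ p.1 p.1 + mdsKT μ p.2 p.2 - 2 * mdsKT μ p.1 p.2 = dist p.1 p.2 ^ 2 := by
      simp only [mdsKT_eq, mdsK, dist_self]; ring
    rw [e] at h
    have e' : ∀ i, lam i * u i p.1 ^ 2 + lam i * u i p.2 ^ 2 - 2 * (lam i * u i p.1 * u i p.2)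
        = lam i * (u i p.1 - u i p.2) ^ 2 := fun i => by ring
    simpa only [e'] using h
  have habs : Summable fun i => |lam i| * (u i p.1 - u i p.2) ^ 2 := by
    refine hsum.summable.abs.congr fun i => ?_
    rw [abs_mul, abs_of_nonneg (sq_nonneg (u i p.1 - u i p.2))]
  have hP : Summable fun i => max (lam i) 0 * (u i p.1 - u i p.2) ^ 2 :=
    Summable.of_nonneg_of_le (fun i => by positivity)
      (fun i => by gcongr; exact max_le (le_abs_self _) (abs_nonneg _)) habs
  have hN : Summable fun i => max (-lam i) 0 * (u i p.1 - u i p.2) ^ 2 :=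
    Summable.of_nonneg_of_le (fun i => by positivity)
      (fun i => by gcongr; exact max_le (neg_le_abs _) (abs_nonneg _)) habs
  refine ⟨hP, hN, ?_⟩
  rw [← hP.tsum_sub hN, ← hsum.tsum_eq]
  refine tsum_congr fun i => ?_
  rw [← sub_mul]
  congr 1
  rcases le_total 0 (lam i) with h | h
  · rw [max_eq_left h, max_eq_right (by linarith)]; ring
  · rw [max_eq_right h, max_eq_left (by linarith)]; ring
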